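/- arXiv:2411.06573 — 4 statements merged into one kernel-verified Lean document; each statement's English description precedes it below -/
import Mathlib

section
/- Let η > 0, T ≥ 1, and let r : ℕ → ℝ, G : ℕ → ℝⁿ, F : ℕ → ℝ satisfy r_0 ≥ 0, F_t > 0, F_t² ≤ B for all t, and the SAV recursion r_{t+1} = r_t / (1 + η·‖G_t‖²/(2F_t²)). Then ∑_{t=0}^{T−1} r_{t+1}·‖G_t‖² ≤ (2B/η)·r_0. -/
set_option autoImplicit false

/-- Bound `C` in the SAV convergence proof: `∑_{t=0}^{T-1} r_{t+1} ‖G_t‖² ≤ (2B/η) r_0`. -/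
theorem sav_sum_r_gradsq_bound {n : ℕ} (η B : ℝ) (hη : 0 < η) (T : ℕ) (hT : 1 ≤ T)
    (r : ℕ → ℝ) (G : ℕ → EuclideanSpace ℝ (Fin n)) (F : ℕ → ℝ)
    (hr0 : 0 ≤ r 0) (hF : ∀ t, 0 < F t) (hFB : ∀ t, (F t) ^ 2 ≤ B)
    (hrec : ∀ t, r (t + 1) = r t / (1 + η * ‖G t‖ ^ 2 / (2 * (F t) ^ 2))) :
    ∑ t ∈ Finset.range T, r (t + 1) * ‖G t‖ ^ 2 ≤ (2 * B / η) * r 0 := by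
  have hden (t : ℕ) : 0 < 1 + η * ‖G t‖ ^ 2 / (2 * (F t) ^ 2) := by
    have := hF t
    positivity
  have hr (t : ℕ) : 0 ≤ r t := by
    induction t with
    | zero => exact hr0
    | succ t ih => exact hrec t ▸ div_nonneg ih (hden t).le
  have hB : 0 ≤ 2 * B / η := by
    have := (sq_nonneg (F 0)).trans (hFB 0)
    positivity
  have hstep (t : ℕ) : r (t + 1) * ‖G t‖ ^ 2 ≤ 2 * B / η * (r t - r (t + 1)) := by
    have hFt := hF t
    have hmul : r (t + 1) * (1 + η * ‖G t‖ ^ 2 / (2 * (F t) ^ 2)) = r t := by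
      rw [hrec t, div_mul_cancel₀ _ (hden t).ne']
    have hdiff : r t - r (t + 1) = r (t + 1) * (η * ‖G t‖ ^ 2 / (2 * (F t) ^ 2)) := by
      linear_combination -hmul
    have hnonneg : 0 ≤ r t - r (t + 1) := by
      rw [hdiff]
      exact mul_nonneg (hr _) (by positivity)
    calc r (t + 1) * ‖G t‖ ^ 2 = 2 * (F t) ^ 2 / η * (r t - r (t + 1)) := by
          rw [hdiff]
          field_simp
      _ ≤ 2 * B / η * (r t - r (t + 1)) := by
          gcongr
          exact hFB t
  calc ∑ t ∈ Finset.range T, r (t + 1) * ‖G t‖ ^ 2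
      ≤ ∑ t ∈ Finset.range T, 2 * B / η * (r t - r (t + 1)) :=
        Finset.sum_le_sum fun t _ => hstep t
    _ = 2 * B / η * (r 0 - r T) := by rw [← Finset.mul_sum, Finset.sum_range_sub']
    _ ≤ 2 * B / η * r 0 := mul_le_mul_of_nonneg_left (sub_le_self _ (hr T)) hB
end

section
/- Let η > 0, T ≥ 1, 0 < a ≤ B, and let r : ℕ → ℝ, G : ℕ → ℝⁿ, F : ℕ → ℝ satisfy r_0 ≥ 0, a ≤ F_t² ≤ B for all t, and the SAV recursion r_{t+1} = r_t / (1 + η·‖G_t‖²/(2F_t²)). Then ∑_{t=0}^{T−1} ρ_t²·‖G_t‖² ≤ (2 B r_0²)/(a η), where ρ_t = r_{t+1}/F_t. -/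
set_option autoImplicit false

/-- One step of the SAV recursion dissipates at least `η (s / f)² g²` of the energy `r²`. -/
theorem sav_step_dissipation {η r s f g : ℝ} (hη : 0 < η) (hf : 0 < f)
    (h : s = r / (1 + η * g ^ 2 / (2 * f ^ 2))) :
    η * ((s / f) ^ 2 * g ^ 2) ≤ r ^ 2 - s ^ 2 := by
  set u := η * g ^ 2 / (2 * f ^ 2) with hu
  have hu0 : 0 ≤ u := by positivity
  have hr : r = s * (1 + u) := by
    rw [h, div_mul_cancel₀ _ (by positivity)]
  have hlhs : η * ((s / f) ^ 2 * g ^ 2) = 2 * u * s ^ 2 := by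
    rw [hu]
    field_simp
  rw [hlhs, hr]
  nlinarith [sq_nonneg (s * u)]

/-- Bound `E` in the SAV convergence proof:
`∑_{t=0}^{T-1} ρ_t² ‖G_t‖² ≤ 2 B r_0² / (a η)` where `ρ_t = r_{t+1}/F_t`. -/
theorem sav_sum_rho_sq_gradsq_bound {n : ℕ} (η a B : ℝ) (hη : 0 < η) (T : ℕ) (hT : 1 ≤ T)
    (ha : 0 < a) (haB : a ≤ B)
    (r : ℕ → ℝ) (G : ℕ → EuclideanSpace ℝ (Fin n)) (F : ℕ → ℝ)
    (hr0 : 0 ≤ r 0) (hFa : ∀ t, a ≤ (F t) ^ 2) (hFB : ∀ t, (F t) ^ 2 ≤ B)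
    (hF : ∀ t, 0 < F t)
    (hrec : ∀ t, r (t + 1) = r t / (1 + η * ‖G t‖ ^ 2 / (2 * (F t) ^ 2))) :
    ∑ t ∈ Finset.range T, (r (t + 1) / F t) ^ 2 * ‖G t‖ ^ 2 ≤ 2 * B * (r 0) ^ 2 / (a * η) := by
  have hsum : η * ∑ t ∈ Finset.range T, (r (t + 1) / F t) ^ 2 * ‖G t‖ ^ 2 ≤ r 0 ^ 2 := by
    rw [Finset.mul_sum]
    calc ∑ t ∈ Finset.range T, η * ((r (t + 1) / F t) ^ 2 * ‖G t‖ ^ 2)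
        ≤ ∑ t ∈ Finset.range T, (r t ^ 2 - r (t + 1) ^ 2) :=
          Finset.sum_le_sum fun t _ => sav_step_dissipation hη (hF t) (hrec t)
      _ = r 0 ^ 2 - r T ^ 2 := Finset.sum_range_sub' (fun t => r t ^ 2) T
      _ ≤ r 0 ^ 2 := sub_le_self _ (sq_nonneg _)
  rw [le_div_iff₀ (mul_pos ha hη)]
  nlinarith [mul_le_mul_of_nonneg_left hsum ha.le,
    mul_le_mul_of_nonneg_right haB (sq_nonneg (r 0)),
    mul_nonneg (ha.le.trans haB) (sq_nonneg (r 0))]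
end

section
/- Let s, r̃, w ∈ ℝ, ψ > 0, Δt > 0, and define a = (s − r̃)², b = 2s(r̃ − s), c = s² − r̃² − (ψ/Δt)·w². Assume a > 0 (i.e., r̃ ≠ s). Then ω₀ := max{(−b − √(b² − 4ac))/(2a), 0} lies in [0,1], satisfies a·ω₀² + b·ω₀ + c ≤ 0, and ω₀ ≤ ω for every ω ∈ [0,1] with a·ω² + b·ω + c ≤ 0; i.e., ω₀ is the smallest feasible relaxation parameter. -/
set_option autoImplicit false

/-- A quadratic with positive leading coefficient and nonnegative discriminant is nonpositive
exactly where its derivative is bounded by the square root of the discriminant. -/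
theorem quadratic_nonpos_iff_abs_le_sqrt {a b c x : ℝ} (ha : 0 < a)
    (hD : 0 ≤ b ^ 2 - 4 * a * c) :
    a * x ^ 2 + b * x + c ≤ 0 ↔ |2 * a * x + b| ≤ √(b ^ 2 - 4 * a * c) := by
  have key : (2 * a * x + b) ^ 2 - (b ^ 2 - 4 * a * c) = 4 * a * (a * x ^ 2 + b * x + c) := by
    ring
  rw [Real.le_sqrt (abs_nonneg _) hD, sq_abs, ← sub_nonpos (b := b ^ 2 - 4 * a * c), key,
    ← mul_le_mul_iff_right₀ (by positivity : 0 < 4 * a), mul_zero]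

/-- If a quadratic with positive leading coefficient is nonpositive at some point, its
discriminant is nonnegative. -/
theorem discrim_nonneg_of_quadratic_nonpos {a b c x : ℝ} (ha : 0 < a)
    (hx : a * x ^ 2 + b * x + c ≤ 0) : 0 ≤ b ^ 2 - 4 * a * c := by
  nlinarith [sq_nonneg (2 * a * x + b), mul_nonpos_of_nonneg_of_nonpos ha.le hx]

/-- The explicit formula `ω₀ = max{(-b - √(b² - 4ac))/(2a), 0}` gives the smallest
feasible relaxation parameter in `[0,1]` for the relaxed-SAV constraint. -/
theorem rsav_omega_zero_optimal (s rt w ψ Δt a b c : ℝ) (hψ : 0 < ψ) (hΔt : 0 < Δt)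
    (ha : a = (s - rt) ^ 2) (hb : b = 2 * s * (rt - s))
    (hc : c = s ^ 2 - rt ^ 2 - (ψ / Δt) * w ^ 2) (hapos : 0 < a) :
    max ((-b - Real.sqrt (b ^ 2 - 4 * a * c)) / (2 * a)) 0 ∈ Set.Icc (0 : ℝ) 1 ∧
      a * (max ((-b - Real.sqrt (b ^ 2 - 4 * a * c)) / (2 * a)) 0) ^ 2 +
        b * (max ((-b - Real.sqrt (b ^ 2 - 4 * a * c)) / (2 * a)) 0) + c ≤ 0 ∧
      ∀ ω ∈ Set.Icc (0 : ℝ) 1, a * ω ^ 2 + b * ω + c ≤ 0 →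
        max ((-b - Real.sqrt (b ^ 2 - 4 * a * c)) / (2 * a)) 0 ≤ ω := by
  have h_one : a * 1 ^ 2 + b * 1 + c ≤ 0 := by
    have : 0 ≤ ψ / Δt * w ^ 2 := by positivity
    subst ha hb hc
    linarith
  have hD := discrim_nonneg_of_quadratic_nonpos hapos h_one
  have h_lower : ∀ ω : ℝ, 0 ≤ ω → a * ω ^ 2 + b * ω + c ≤ 0 →
      max ((-b - √(b ^ 2 - 4 * a * c)) / (2 * a)) 0 ≤ ω := by
    intro ω hω hfeas
    have := (abs_le.mp ((quadratic_nonpos_iff_abs_le_sqrt hapos hD).mp hfeas)).1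
    refine max_le ?_ hω
    rw [div_le_iff₀ (by positivity)]
    linarith
  have h_le_one := h_lower 1 zero_le_one h_one
  refine ⟨⟨le_max_right _ _, h_le_one⟩, ?_, fun ω hω => h_lower ω hω.1⟩
  have h_root := le_max_left ((-b - √(b ^ 2 - 4 * a * c)) / (2 * a)) 0
  generalize max ((-b - √(b ^ 2 - 4 * a * c)) / (2 * a)) 0 = m at h_le_one h_root ⊢
  rw [div_le_iff₀ (by positivity)] at h_root
  rw [quadratic_nonpos_iff_abs_le_sqrt hapos hD] at h_one ⊢
  have h_upper := (abs_le.mp h_one).2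
  have := mul_le_mul_of_nonneg_left h_le_one hapos.le
  exact abs_le.mpr ⟨by linarith, by linarith⟩
end

section
/- Let f : ℝⁿ → ℝ be differentiable with L-Lipschitz gradient (‖∇f(x) − ∇f(y)‖ ≤ L‖x − y‖ for all x, y), let c ∈ ℝ, γ > 0, a > 0, and assume ‖∇f(x)‖ ≤ γ and f(x) + c ≥ a for all x. Then F(x) = √(f(x)+c) has Lipschitz gradient with constant L_F = (1/(2√a))·(L + γ²/(2a)): for all x, y ∈ ℝⁿ, ‖∇F(x) − ∇F(y)‖ ≤ L_F·‖x − y‖. -/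
set_option autoImplicit false

/-- The gradient of the shifted energy is `∇f / (2 √(f + c))`. -/
theorem gradient_sqrt_add_const {E : Type*} [NormedAddCommGroup E] [InnerProductSpace ℝ E]
    [CompleteSpace E] {f : E → ℝ} {x : E} {c : ℝ} (hf : DifferentiableAt ℝ f x)
    (hx : f x + c ≠ 0) :
    gradient (fun z => Real.sqrt (f z + c)) x = (2 * Real.sqrt (f x + c))⁻¹ • gradient f x := by
  refine HasGradientAt.gradient ?_
  rw [hasGradientAt_iff_hasFDerivAt]
  have h := ((hf.hasGradientAt.hasFDerivAt).add_const c).sqrt hx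
  simpa using h

theorem abs_sub_le_of_norm_gradient_le {E : Type*} [NormedAddCommGroup E]
    [InnerProductSpace ℝ E] [CompleteSpace E] {f : E → ℝ} (hf : Differentiable ℝ f) {γ : ℝ}
    (hgrad : ∀ x, ‖gradient f x‖ ≤ γ) (x y : E) : |f x - f y| ≤ γ * ‖x - y‖ := by
  refine convex_univ.norm_image_sub_le_of_norm_fderiv_le (𝕜 := ℝ) (fun z _ => hf z)
    (fun z _ => ?_) (Set.mem_univ y) (Set.mem_univ x)
  simpa [gradient] using hgrad z

/-- The map `t ↦ 1 / (2 √t)` is Lipschitz with constant `1 / (4 a √a)` on `[a, ∞)`. -/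
theorem abs_inv_two_mul_sqrt_sub_le {a u v : ℝ} (ha : 0 < a) (hu : a ≤ u) (hv : a ≤ v) :
    |(2 * Real.sqrt u)⁻¹ - (2 * Real.sqrt v)⁻¹| ≤ |u - v| / (4 * a * Real.sqrt a) := by
  have hs : 0 < Real.sqrt a := Real.sqrt_pos.2 ha
  have hp : Real.sqrt a ≤ Real.sqrt u := Real.sqrt_le_sqrt hu
  have hq : Real.sqrt a ≤ Real.sqrt v := Real.sqrt_le_sqrt hv
  have hsa := Real.sq_sqrt ha.le
  have hpu := Real.sq_sqrt (ha.le.trans hu)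
  have hqv := Real.sq_sqrt (ha.le.trans hv)
  generalize Real.sqrt a = s at *
  generalize Real.sqrt u = p at *
  generalize Real.sqrt v = q at *
  subst hsa hpu hqv
  have hp0 : 0 < p := hs.trans_le hp
  have hq0 : 0 < q := hs.trans_le hq
  have key : (2 * p)⁻¹ - (2 * q)⁻¹ = -((p ^ 2 - q ^ 2) / (2 * (p * q) * (p + q))) := by
    field_simp
    ring
  rw [key, abs_neg, abs_div, abs_of_pos (by positivity : 0 < 2 * (p * q) * (p + q))]
  refine div_le_div_of_nonneg_left (abs_nonneg _) (by positivity) ?_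
  calc 4 * s ^ 2 * s = 2 * (s * s) * (s + s) := by ring
    _ ≤ 2 * (p * q) * (p + q) := by gcongr

/-- Smoothness of the shifted energy `F(x) = √(f(x)+c)`: if `∇f` is `L`-Lipschitz,
`‖∇f‖ ≤ γ`, and `f + c ≥ a > 0`, then `∇F` is Lipschitz with constant
`L_F = (1/(2√a)) (L + γ²/(2a))`. -/
theorem shifted_energy_gradient_lipschitz {n : ℕ} (f : EuclideanSpace ℝ (Fin n) → ℝ)
    (hf : Differentiable ℝ f) (c γ a L : ℝ) (hγ : 0 < γ) (ha : 0 < a)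
    (hLip : ∀ x y : EuclideanSpace ℝ (Fin n), ‖gradient f x - gradient f y‖ ≤ L * ‖x - y‖)
    (hgrad : ∀ x, ‖gradient f x‖ ≤ γ)
    (hbound : ∀ x, a ≤ f x + c) :
    ∀ x y : EuclideanSpace ℝ (Fin n),
      ‖gradient (fun z => Real.sqrt (f z + c)) x - gradient (fun z => Real.sqrt (f z + c)) y‖ ≤
        (1 / (2 * Real.sqrt a)) * (L + γ ^ 2 / (2 * a)) * ‖x - y‖ := by
  intro x y
  have hpos : ∀ z, f z + c ≠ 0 := fun z => (ha.trans_le (hbound z)).ne'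
  have hs : 0 < Real.sqrt a := Real.sqrt_pos.2 ha
  rw [gradient_sqrt_add_const (hf x) (hpos x), gradient_sqrt_add_const (hf y) (hpos y)]
  have hcoef := abs_inv_two_mul_sqrt_sub_le ha (hbound x) (hbound y)
  rw [add_sub_add_right_eq_sub] at hcoef
  have hp : (2 * Real.sqrt (f x + c))⁻¹ ≤ (2 * Real.sqrt a)⁻¹ := by
    gcongr
    exact hbound x
  set p := (2 * Real.sqrt (f x + c))⁻¹
  set q := (2 * Real.sqrt (f y + c))⁻¹
  have hp0 : 0 ≤ p := by positivity
  calc ‖p • gradient f x - q • gradient f y‖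
      = ‖p • (gradient f x - gradient f y) + (p - q) • gradient f y‖ := by
        congr 1
        module
    _ ≤ p * ‖gradient f x - gradient f y‖ + |p - q| * ‖gradient f y‖ := by
        refine (norm_add_le _ _).trans_eq ?_
        rw [norm_smul, norm_smul, Real.norm_eq_abs, Real.norm_eq_abs, abs_of_nonneg hp0]
    _ ≤ (2 * Real.sqrt a)⁻¹ * (L * ‖x - y‖)
          + γ * ‖x - y‖ / (4 * a * Real.sqrt a) * γ := by
        gcongr
        · exact hLip x y
        · refine hcoef.trans ?_
          gcongr
          exact abs_sub_le_of_norm_gradient_le hf hgrad x y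
        · exact hgrad y
    _ = (1 / (2 * Real.sqrt a)) * (L + γ ^ 2 / (2 * a)) * ‖x - y‖ := by
        field_simp
        ring
end
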